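/- Let Λc ⊆ Λ be nested lattices in ℝⁿ with finite quotient group Λ/Λc of cardinality M > 4, and let h1, h2 be nonzero coprime integers such that no nonzero element of Λ/Λc has order dividing h1 or h2. Fix P > 0, let g(w) = (2πP)^{−n/2} exp(−‖w‖²/(2P)), G(c) = Σ_{u∈c} g(u) for each coset c of Λc in Λ, and for each coset x define P_x(w) = (1/M) Σ_{cosets y} Σ_{u ∈ x, v ∈ y with h1·u + h2·v = w} (g(u)/G(x))·(g(v)/G(y)), with P̄(w) = (1/M) Σ_{cosets x} P_x(w). Let ε = ε_{Λc}(√(P/(h1²+h2²))) be the flatness factor of Λc. If ε < 1/(16e), then the mutual information between the uniformly distributed message X and the observation W = h1·U + h2·V, given explicitly by I(X;W) = Σ_{cosets x} Σ_{w∈Λ} (1/M)·P_x(w)·log₂(P_x(w)/P̄(w)), satisfies I(X;W) ≤ 16ε·(log₂ M − log₂(16ε)). -/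

import Mathlib

noncomputable section

/-- The Gaussian density `g(w) = (2πP)^{−n/2}·exp(−‖w‖²/(2P))` on `ℝⁿ`. -/
def gaussDensity {n : ℕ} (P : ℝ) (w : EuclideanSpace ℝ (Fin n)) : ℝ :=
  (2 * Real.pi * P) ^ (-(n : ℝ) / 2) * Real.exp (-‖w‖ ^ 2 / (2 * P))

/-- The coset of `Λc` in `Λ` corresponding to an element `c` of the quotient group `Λ/Λc`,
viewed as a subset of `ℝⁿ`. -/
def coset {n : ℕ} (Λ Λc : Submodule ℤ (EuclideanSpace ℝ (Fin n)))
    (c : Λ ⧸ Λc.comap Λ.subtype) : Set (EuclideanSpace ℝ (Fin n)) :=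
  {u | ∃ hu : u ∈ Λ, (Submodule.Quotient.mk (⟨u, hu⟩ : Λ) : Λ ⧸ Λc.comap Λ.subtype) = c}

/-- The total mass `G(c) = Σ_{u∈c} g(u)` of the Gaussian density on the coset `c`. -/
def cosetMass {n : ℕ} (Λ Λc : Submodule ℤ (EuclideanSpace ℝ (Fin n))) (P : ℝ)
    (c : Λ ⧸ Λc.comap Λ.subtype) : ℝ :=
  ∑' u : coset Λ Λc c, gaussDensity P (u : EuclideanSpace ℝ (Fin n))

/-- The conditional distribution of the relay's observation `W = h₁·U + h₂·V` given the
message (coset) `x`: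
`P_x(w) = (1/M)·Σ_{cosets y} Σ_{u∈x, v∈y, h₁·u+h₂·v=w} (g(u)/G(x))·(g(v)/G(y))`. -/
def condDist {n : ℕ} (Λ Λc : Submodule ℤ (EuclideanSpace ℝ (Fin n))) (P : ℝ) (h₁ h₂ : ℤ)
    (x : Λ ⧸ Λc.comap Λ.subtype) (w : EuclideanSpace ℝ (Fin n)) : ℝ :=
  (1 / (Nat.card (Λ ⧸ Λc.comap Λ.subtype) : ℝ)) *
    ∑' y : Λ ⧸ Λc.comap Λ.subtype,
      ∑' p : {p : EuclideanSpace ℝ (Fin n) × EuclideanSpace ℝ (Fin n) //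
          p.1 ∈ coset Λ Λc x ∧ p.2 ∈ coset Λ Λc y ∧
            (h₁ : ℝ) • p.1 + (h₂ : ℝ) • p.2 = w},
        (gaussDensity P p.val.1 / cosetMass Λ Λc P x) *
          (gaussDensity P p.val.2 / cosetMass Λ Λc P y)

/-- The unconditional distribution `P̄(w) = (1/M)·Σ_{cosets x} P_x(w)` of the observation. -/
def avgDist {n : ℕ} (Λ Λc : Submodule ℤ (EuclideanSpace ℝ (Fin n))) (P : ℝ) (h₁ h₂ : ℤ)
    (w : EuclideanSpace ℝ (Fin n)) : ℝ :=
  (1 / (Nat.card (Λ ⧸ Λc.comap Λ.subtype) : ℝ)) *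
    ∑' x : Λ ⧸ Λc.comap Λ.subtype, condDist Λ Λc P h₁ h₂ x w

/-- The lattice Gaussian sum `g_{z,θ}(L) = Σ_{λ∈L} (2πθ²)^{−n/2}·exp(−‖λ − z‖²/(2θ²))`. -/
def latticeGaussSum {n : ℕ} (L : Set (EuclideanSpace ℝ (Fin n))) (θ : ℝ)
    (z : EuclideanSpace ℝ (Fin n)) : ℝ :=
  ∑' l : L, (2 * Real.pi * θ ^ 2) ^ (-(n : ℝ) / 2) *
    Real.exp (-‖(l : EuclideanSpace ℝ (Fin n)) - z‖ ^ 2 / (2 * θ ^ 2))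

/-- The flatness factor `ε_Λ(θ) = sup_{x∈ℝⁿ} |covol(Λ)·g_{x,θ}(Λ) − 1|` of a full-rank
lattice `Λ`, where `covol(Λ)` is the volume of a fundamental domain of `Λ`. -/
def flatnessFactor {n : ℕ} (Λ : Submodule ℤ (EuclideanSpace ℝ (Fin n))) (θ : ℝ) : ℝ :=
  ⨆ x : EuclideanSpace ℝ (Fin n),
    |ZLattice.covolume Λ * latticeGaussSum (Λ : Set (EuclideanSpace ℝ (Fin n))) θ x - 1|



abbrev EE (n : ℕ) := EuclideanSpace ℝ (Fin n)

/-- Unnormalised Gaussian sum over a lattice. -/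
def gsum {n : ℕ} (L : Submodule ℤ (EuclideanSpace ℝ (Fin n))) (c : ℝ)
    (z : EuclideanSpace ℝ (Fin n)) : ℝ :=
  ∑' l : L, Real.exp (-(c * ‖(l : EuclideanSpace ℝ (Fin n)) - z‖ ^ 2))

lemma summable_gauss_zero {n : ℕ} (L : Submodule ℤ (EuclideanSpace ℝ (Fin n)))
    [DiscreteTopology L] (c : ℝ) (hc : 0 < c) :
    Summable fun l : L => Real.exp (-(c * ‖(l : EuclideanSpace ℝ (Fin n))‖ ^ 2)) := by
  set k := Module.finrank ℤ L + 1 with hk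
  have h := (ZLattice.summable_norm_pow_inv L (2 * k) (by omega)).mul_left
    ((k.factorial : ℝ) / c ^ k)
  refine Summable.of_norm_bounded_eventually h ?_
  have hfin : ({0} : Set L).Finite := Set.finite_singleton 0
  refine hfin.subset ?_
  intro l hl
  by_contra hne
  apply hl
  have hne' : l ≠ 0 := hne
  have hpos : 0 < ‖l‖ := norm_pos_iff.mpr hne'
  have hexp := Real.pow_div_factorial_le_exp (c * ‖l‖ ^ 2) (by positivity) k
  have hfac : (0 : ℝ) < k.factorial := by exact_mod_cast Nat.factorial_pos k
  change ‖Real.exp (-(c * ‖(l : EuclideanSpace ℝ (Fin n))‖ ^ 2))‖ ≤ (k.factorial : ℝ) / c ^ k * ‖l‖⁻¹ ^ (2 * k)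
  rw [Real.norm_eq_abs, abs_of_pos (Real.exp_pos _), Real.exp_neg]
  have : ‖(l : EuclideanSpace ℝ (Fin n))‖ = ‖l‖ := rfl
  rw [this]
  have h2 : (k.factorial : ℝ) / c ^ k * ‖l‖⁻¹ ^ (2 * k) = ((c * ‖l‖ ^ 2) ^ k / k.factorial)⁻¹ := by
    rw [mul_pow, ← pow_mul, inv_pow]
    field_simp
  rw [h2]
  gcongr

lemma gauss_le {n : ℕ} (c : ℝ) (hc : 0 < c) (l z : EuclideanSpace ℝ (Fin n)) :
    Real.exp (-(c * ‖l - z‖ ^ 2)) ≤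
      Real.exp (c * ‖z‖ ^ 2) * Real.exp (-((c / 2) * ‖l‖ ^ 2)) := by
  rw [← Real.exp_add]
  apply Real.exp_le_exp.mpr
  have h : ‖l‖ ≤ ‖l - z‖ + ‖z‖ := by simpa using norm_add_le (l - z) z
  have h3 : ‖l‖ ^ 2 ≤ 2 * ‖l - z‖ ^ 2 + 2 * ‖z‖ ^ 2 := by
    nlinarith [sq_nonneg (‖l - z‖ - ‖z‖), norm_nonneg l]
  nlinarith

lemma summable_gauss {n : ℕ} (L : Submodule ℤ (EuclideanSpace ℝ (Fin n)))
    [DiscreteTopology L] (c : ℝ) (hc : 0 < c) (z : EuclideanSpace ℝ (Fin n)) :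
    Summable fun l : L => Real.exp (-(c * ‖(l : EuclideanSpace ℝ (Fin n)) - z‖ ^ 2)) := by
  have h := (summable_gauss_zero L (c / 2) (by positivity)).mul_left (Real.exp (c * ‖z‖ ^ 2))
  refine Summable.of_nonneg_of_le ?_ ?_ h
  · intro l; exact (Real.exp_pos _).le
  · intro l
    have := gauss_le c hc l.1 z
    exact this

lemma gsum_pos {n : ℕ} (L : Submodule ℤ (EuclideanSpace ℝ (Fin n)))
    [DiscreteTopology L] (c : ℝ) (hc : 0 < c) (z : EuclideanSpace ℝ (Fin n)) :
    0 < gsum L c z :=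
  (summable_gauss L c hc z).tsum_pos (fun _ => (Real.exp_pos _).le) 0 (Real.exp_pos _)

lemma gsum_add {n : ℕ} (L : Submodule ℤ (EuclideanSpace ℝ (Fin n))) (c : ℝ)
    (z : EuclideanSpace ℝ (Fin n)) (m : L) : gsum L c (z + m) = gsum L c z := by
  unfold gsum
  rw [← (Equiv.addRight m).tsum_eq]
  congr 1
  ext l
  congr 4
  simp

lemma exists_near {n : ℕ} (L : Submodule ℤ (EuclideanSpace ℝ (Fin n)))
    [DiscreteTopology L] [IsZLattice ℝ L] :
    ∃ R : ℝ, ∀ z : EuclideanSpace ℝ (Fin n), ∃ m : L, ‖z - m‖ ≤ R := by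
  have : Module.Free ℤ L := ZLattice.module_free ℝ L
  have : Module.Finite ℤ L := ZLattice.module_finite ℝ L
  let b := Module.Free.chooseBasis ℤ L
  let b' := b.ofZLatticeBasis ℝ L
  refine ⟨∑ i, ‖b' i‖, fun z => ⟨⟨(ZSpan.floor b' z : EuclideanSpace ℝ (Fin n)), ?_⟩, ?_⟩⟩
  · have := (ZSpan.floor b' z).2
    exact (b.ofZLatticeBasis_span ℝ L).le this
  · exact ZSpan.norm_fract_le b' z

lemma gsum_bdd {n : ℕ} (L : Submodule ℤ (EuclideanSpace ℝ (Fin n)))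
    [DiscreteTopology L] [IsZLattice ℝ L] (c : ℝ) (hc : 0 < c) :
    ∃ B : ℝ, ∀ z, gsum L c z ≤ B := by
  obtain ⟨R, hR⟩ := exists_near L
  refine ⟨Real.exp (c * R ^ 2) * ∑' l : L,
    Real.exp (-((c / 2) * ‖(l : EuclideanSpace ℝ (Fin n))‖ ^ 2)), fun z => ?_⟩
  obtain ⟨m, hm⟩ := hR z
  have : gsum L c z = gsum L c (z - m) := by
    rw [← gsum_add L c (z - m) m]; simp
  rw [this, ← tsum_mul_left]
  have hs := (summable_gauss_zero L (c / 2) (by positivity)).mul_left (Real.exp (c * R ^ 2))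
  refine Summable.tsum_le_tsum ?_ (summable_gauss L c hc _) hs
  intro l
  have h1 := gauss_le c hc l.1 (z - m.1)
  have h2 : Real.exp (c * ‖z - m.1‖ ^ 2) ≤ Real.exp (c * R ^ 2) := by
    apply Real.exp_le_exp.mpr
    have := pow_le_pow_left₀ (norm_nonneg _) hm 2
    exact mul_le_mul_of_nonneg_left this hc.le
  have h3 := mul_le_mul_of_nonneg_right h2 (Real.exp_pos (-((c / 2) * ‖l.1‖ ^ 2))).le
  exact h1.trans h3

lemma flat_facts {n : ℕ} (L : Submodule ℤ (EuclideanSpace ℝ (Fin n)))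
    [DiscreteTopology L] [IsZLattice ℝ L] (θ : ℝ) (hθ : 0 < θ) :
    0 ≤ flatnessFactor L θ ∧ (∀ z z', (1 - flatnessFactor L θ) * gsum L (1 / (2 * θ ^ 2)) z ≤
      (1 + flatnessFactor L θ) * gsum L (1 / (2 * θ ^ 2)) z' ∨ 1 ≤ flatnessFactor L θ) := by
  have hc : 0 < 1 / (2 * θ ^ 2) := by positivity
  set c := 1 / (2 * θ ^ 2) with hcdef
  set V := ZLattice.covolume L with hV
  have hVpos : 0 < V := ZLattice.covolume_pos L MeasureTheory.volume
  set A := (2 * Real.pi * θ ^ 2) ^ (-(n : ℝ) / 2) with hA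
  have hApos : 0 < A := by positivity
  have hl : ∀ z, latticeGaussSum (L : Set (EuclideanSpace ℝ (Fin n))) θ z = A * gsum L c z := by
    intro z
    unfold latticeGaussSum gsum
    rw [← tsum_mul_left]
    congr 1
    ext l
    congr 2
    rw [hcdef]; ring
  obtain ⟨B, hB⟩ := gsum_bdd L c hc
  have hbd : BddAbove (Set.range fun x : EuclideanSpace ℝ (Fin n) =>
      |V * latticeGaussSum (L : Set (EuclideanSpace ℝ (Fin n))) θ x - 1|) := by
    refine ⟨V * (A * B) + 1, ?_⟩
    rintro _ ⟨x, rfl⟩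
    simp only
    rw [hl]
    have h1 := hB x
    have h2 := gsum_pos L c hc x
    have h3 : V * (A * gsum L c x) ≤ V * (A * B) := by gcongr
    have h4 : 0 < V * (A * gsum L c x) := by positivity
    rw [abs_le]; constructor <;> linarith
  have hle : ∀ x, |V * (A * gsum L c x) - 1| ≤ flatnessFactor L θ := by
    intro x
    have := le_ciSup hbd x
    rw [← hl]; exact this
  refine ⟨(abs_nonneg _).trans (hle 0), fun z z' => ?_⟩
  set ε := flatnessFactor L θ
  by_cases h1 : 1 ≤ ε
  · exact Or.inr h1
  left
  push Not at h1
  have hz := abs_le.mp (hle z)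
  have hz' := abs_le.mp (hle z')
  have hε : 0 ≤ ε := (abs_nonneg _).trans (hle 0)
  have hVA : 0 < V * A := by positivity
  have e1 : (V * A) * gsum L c z ≤ 1 + ε := by nlinarith
  have e2 : 1 - ε ≤ (V * A) * gsum L c z' := by nlinarith
  have : (V * A) * ((1 - ε) * gsum L c z) ≤ (V * A) * ((1 + ε) * gsum L c z') := by
    calc _ = (1 - ε) * ((V * A) * gsum L c z) := by ring
      _ ≤ (1 - ε) * (1 + ε) := by gcongr
      _ = (1 + ε) * (1 - ε) := by ring
      _ ≤ (1 + ε) * ((V * A) * gsum L c z') := by gcongr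
      _ = _ := by ring
  exact le_of_mul_le_mul_left this hVA

section cosets

variable {n : ℕ} {Λ Λc : Submodule ℤ (EuclideanSpace ℝ (Fin n))}

lemma coset_sub {x : Λ ⧸ Λc.comap Λ.subtype} {u u' : EuclideanSpace ℝ (Fin n)}
    (hu : u ∈ coset Λ Λc x) (hu' : u' ∈ coset Λ Λc x) : u - u' ∈ Λc := by
  obtain ⟨h, rfl⟩ := hu
  obtain ⟨h', e⟩ := hu'
  have := (Submodule.Quotient.eq _).mp e.symm
  exact this

lemma coset_add (hle : Λc ≤ Λ) {x : Λ ⧸ Λc.comap Λ.subtype} {u l : EuclideanSpace ℝ (Fin n)}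
    (hu : u ∈ coset Λ Λc x) (hl : l ∈ Λc) : u + l ∈ coset Λ Λc x := by
  obtain ⟨h, rfl⟩ := hu
  refine ⟨Λ.add_mem h (hle hl), ?_⟩
  refine (Submodule.Quotient.eq _).mpr ?_
  simpa using hl

lemma coset_nonempty (x : Λ ⧸ Λc.comap Λ.subtype) : ∃ u, u ∈ coset Λ Λc x := by
  obtain ⟨u, rfl⟩ := Submodule.Quotient.mk_surjective _ x
  exact ⟨u, u.2, rfl⟩

lemma coset_lin {x y : Λ ⧸ Λc.comap Λ.subtype} {u v : EuclideanSpace ℝ (Fin n)}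
    (h₁ h₂ : ℤ) (hu : u ∈ coset Λ Λc x) (hv : v ∈ coset Λ Λc y) :
    (h₁ : ℝ) • u + (h₂ : ℝ) • v ∈ coset Λ Λc (h₁ • x + h₂ • y) := by
  obtain ⟨h, rfl⟩ := hu
  obtain ⟨h', rfl⟩ := hv
  rw [Int.cast_smul_eq_zsmul, Int.cast_smul_eq_zsmul]
  refine ⟨Λ.add_mem (Λ.smul_mem _ h) (Λ.smul_mem _ h'), ?_⟩
  rw [← Submodule.Quotient.mk_smul, ← Submodule.Quotient.mk_smul, ← Submodule.Quotient.mk_add]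
  rfl

lemma coset_inj {x y : Λ ⧸ Λc.comap Λ.subtype} {u : EuclideanSpace ℝ (Fin n)}
    (hu : u ∈ coset Λ Λc x) (hv : u ∈ coset Λ Λc y) : x = y := by
  obtain ⟨h, rfl⟩ := hu
  obtain ⟨h', rfl⟩ := hv
  rfl

/-- A coset is parametrised by `Λc`. -/
def cosetEquiv (hle : Λc ≤ Λ) {x : Λ ⧸ Λc.comap Λ.subtype} {u : EuclideanSpace ℝ (Fin n)}
    (hu : u ∈ coset Λ Λc x) : Λc ≃ coset Λ Λc x where
  toFun l := ⟨u + l.1, coset_add hle hu l.2⟩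
  invFun v := ⟨v.1 - u, coset_sub v.2 hu⟩
  left_inv l := by ext1; simp
  right_inv v := by ext1; simp

lemma gaussDensity_pos {P : ℝ} (hP : 0 < P) (u : EuclideanSpace ℝ (Fin n)) :
    0 < gaussDensity P u := by
  unfold gaussDensity; positivity

lemma coset_summable [DiscreteTopology Λc] (hle : Λc ≤ Λ) {P : ℝ} (hP : 0 < P)
    (x : Λ ⧸ Λc.comap Λ.subtype) :
    Summable fun u : coset Λ Λc x => gaussDensity P u.1 := by
  obtain ⟨u, hu⟩ := coset_nonempty x
  rw [← (cosetEquiv hle hu).summable_iff]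
  have h := (summable_gauss Λc (1 / (2 * P)) (by positivity) (-u)).mul_left
    ((2 * Real.pi * P) ^ (-(n : ℝ) / 2))
  refine h.congr ?_
  intro l
  change _ = gaussDensity P (u + l.1)
  unfold gaussDensity
  rw [sub_neg_eq_add, add_comm l.1 u]
  congr 2
  ring

lemma cosetMass_pos [DiscreteTopology Λc] (hle : Λc ≤ Λ) {P : ℝ} (hP : 0 < P)
    (x : Λ ⧸ Λc.comap Λ.subtype) : 0 < cosetMass Λ Λc P x := by
  obtain ⟨u, hu⟩ := coset_nonempty x
  exact (coset_summable hle hP x).tsum_pos (fun v => (gaussDensity_pos hP v.1).le) ⟨u, hu⟩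
    (gaussDensity_pos hP u)

/-- The Gaussian weight of all pairs in `x × y` observed as `w`. -/
def TT (Λ Λc : Submodule ℤ (EuclideanSpace ℝ (Fin n))) (P : ℝ) (h₁ h₂ : ℤ)
    (x y : Λ ⧸ Λc.comap Λ.subtype) (w : EuclideanSpace ℝ (Fin n)) : ℝ :=
  ∑' p : {p : EuclideanSpace ℝ (Fin n) × EuclideanSpace ℝ (Fin n) //
          p.1 ∈ coset Λ Λc x ∧ p.2 ∈ coset Λ Λc y ∧
            (h₁ : ℝ) • p.1 + (h₂ : ℝ) • p.2 = w},
    gaussDensity P p.val.1 * gaussDensity P p.val.2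

lemma TT_nonneg {P : ℝ} (hP : 0 < P) (h₁ h₂ : ℤ)
    (x y : Λ ⧸ Λc.comap Λ.subtype) (w : EuclideanSpace ℝ (Fin n)) : 0 ≤ TT Λ Λc P h₁ h₂ x y w :=
  tsum_nonneg fun p => (mul_pos (gaussDensity_pos hP _) (gaussDensity_pos hP _)).le

lemma TT_zero {P : ℝ} {h₁ h₂ : ℤ} {x y c : Λ ⧸ Λc.comap Λ.subtype}
    {w : EuclideanSpace ℝ (Fin n)} (hw : w ∈ coset Λ Λc c) (hc : h₁ • x + h₂ • y ≠ c) :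
    TT Λ Λc P h₁ h₂ x y w = 0 := by
  have : IsEmpty {p : EuclideanSpace ℝ (Fin n) × EuclideanSpace ℝ (Fin n) //
          p.1 ∈ coset Λ Λc x ∧ p.2 ∈ coset Λ Λc y ∧
            (h₁ : ℝ) • p.1 + (h₂ : ℝ) • p.2 = w} := by
    refine ⟨fun p => hc ?_⟩
    obtain ⟨hu, hv, e⟩ := p.2
    have := coset_lin h₁ h₂ hu hv
    rw [e] at this
    exact coset_inj this hw
  exact tsum_empty

lemma condDist_eq (P : ℝ) (h₁ h₂ : ℤ)
    (x : Λ ⧸ Λc.comap Λ.subtype) (w : EuclideanSpace ℝ (Fin n)) :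
    condDist Λ Λc P h₁ h₂ x w = (1 / (Nat.card (Λ ⧸ Λc.comap Λ.subtype) : ℝ)) *
      ∑' y : Λ ⧸ Λc.comap Λ.subtype,
        TT Λ Λc P h₁ h₂ x y w / (cosetMass Λ Λc P x * cosetMass Λ Λc P y) := by
  unfold condDist TT
  congr 1
  congr 1
  ext y
  rw [div_eq_mul_inv, ← tsum_mul_right]
  congr 1
  ext p
  rw [div_mul_div_comm, div_eq_mul_inv]

/-- Summing over observations. -/
lemma TT_hasSum [DiscreteTopology Λc] (hle : Λc ≤ Λ) {P : ℝ} (hP : 0 < P) (h₁ h₂ : ℤ)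
    (x y : Λ ⧸ Λc.comap Λ.subtype) :
    HasSum (fun w : Λ => TT Λ Λc P h₁ h₂ x y w.1) (cosetMass Λ Λc P x * cosetMass Λ Λc P y) := by
  have hs := Summable.mul_of_nonneg (coset_summable (P := P) hle hP x)
    (coset_summable (P := P) hle hP y) (fun v => (gaussDensity_pos hP v.1).le)
    (fun v => (gaussDensity_pos hP v.1).le)
  have hsum := (coset_summable (P := P) hle hP x).tsum_mul_tsum
    (coset_summable (P := P) hle hP y) hs
  have h := hs.hasSum
  rw [← hsum] at h
  let e : (Σ w : Λ, {p : EuclideanSpace ℝ (Fin n) × EuclideanSpace ℝ (Fin n) //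
          p.1 ∈ coset Λ Λc x ∧ p.2 ∈ coset Λ Λc y ∧
            (h₁ : ℝ) • p.1 + (h₂ : ℝ) • p.2 = w.1}) ≃ coset Λ Λc x × coset Λ Λc y :=
    { toFun := fun q => (⟨q.2.1.1, q.2.2.1⟩, ⟨q.2.1.2, q.2.2.2.1⟩)
      invFun := fun p => ⟨⟨(h₁ : ℝ) • p.1.1 + (h₂ : ℝ) • p.2.1,
        (coset_lin h₁ h₂ p.1.2 p.2.2).1⟩, ⟨(p.1.1, p.2.1), p.1.2, p.2.2, rfl⟩⟩
      left_inv := by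
        rintro ⟨⟨w, hw⟩, ⟨⟨u, v⟩, hu, hv, huv⟩⟩
        simp only at huv
        subst huv
        rfl
      right_inv := fun p => rfl }
  have h2 := e.hasSum_iff.mpr h
  have h3 := h2.sigma (fun w => (h2.summable.sigma_factor w).hasSum)
  exact h3

lemma quad_identity (a b : ℝ) (u v l : EuclideanSpace ℝ (Fin n)) (hs : 0 < a ^ 2 + b ^ 2) :
    ‖u + b • l‖ ^ 2 + ‖v - a • l‖ ^ 2 = ‖a • u + b • v‖ ^ 2 / (a ^ 2 + b ^ 2) +
      (a ^ 2 + b ^ 2) * ‖l - (a ^ 2 + b ^ 2)⁻¹ • (a • v - b • u)‖ ^ 2 := by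
  simp only [norm_add_sq_real, norm_sub_sq_real, norm_smul, inner_smul_left, inner_smul_right,
    inner_add_left, inner_sub_left, inner_add_right, inner_sub_right, mul_pow,
    Real.norm_eq_abs, sq_abs]
  simp only [conj_trivial, real_inner_comm u l, real_inner_comm v l, real_inner_comm u v]
  field_simp
  ring

/-- The key computation: the weight is a lattice Gaussian sum. -/
lemma TT_eq (hle : Λc ≤ Λ) {P : ℝ} (hP : 0 < P) {h₁ h₂ : ℤ} (hh₁ : h₁ ≠ 0)
    (hco : IsCoprime h₁ h₂)
    {x y : Λ ⧸ Λc.comap Λ.subtype} {w : EuclideanSpace ℝ (Fin n)}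
    (hw : w ∈ coset Λ Λc (h₁ • x + h₂ • y)) :
    ∃ z, TT Λ Λc P h₁ h₂ x y w = ((2 * Real.pi * P) ^ (-(n : ℝ) / 2) *
      (2 * Real.pi * P) ^ (-(n : ℝ) / 2) *
      Real.exp (-(‖w‖ ^ 2 / ((h₁ : ℝ) ^ 2 + (h₂ : ℝ) ^ 2) / (2 * P)))) *
      gsum Λc (((h₁ : ℝ) ^ 2 + (h₂ : ℝ) ^ 2) / (2 * P)) z := by
  obtain ⟨a, b, hab⟩ := hco
  have habR : (a : ℝ) * h₁ + b * h₂ = 1 := by exact_mod_cast hab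
  obtain ⟨u₀, hu₀⟩ := coset_nonempty x
  obtain ⟨v₀, hv₀⟩ := coset_nonempty y
  have hd := coset_sub hw (coset_lin h₁ h₂ hu₀ hv₀)
  have zmem : ∀ (k : ℤ) (l : EuclideanSpace ℝ (Fin n)), l ∈ Λc → (k : ℝ) • l ∈ Λc := by
    intro k l hl
    rw [Int.cast_smul_eq_zsmul]; exact Λc.smul_mem _ hl
  obtain ⟨u, v, hu, hv, huv⟩ : ∃ u v, u ∈ coset Λ Λc x ∧ v ∈ coset Λ Λc y ∧
      (h₁ : ℝ) • u + (h₂ : ℝ) • v = w := by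
    refine ⟨_, _, coset_add hle hu₀ (zmem a _ hd), coset_add hle hv₀ (zmem b _ hd), ?_⟩
    have : w = ((a : ℝ) * h₁ + b * h₂) • (w - ((h₁ : ℝ) • u₀ + (h₂ : ℝ) • v₀)) +
      ((h₁ : ℝ) • u₀ + (h₂ : ℝ) • v₀) := by rw [habR]; simp
    conv_rhs => rw [this]
    module
  let e : Λc ≃ {p : EuclideanSpace ℝ (Fin n) × EuclideanSpace ℝ (Fin n) //
          p.1 ∈ coset Λ Λc x ∧ p.2 ∈ coset Λ Λc y ∧
            (h₁ : ℝ) • p.1 + (h₂ : ℝ) • p.2 = w} :=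
    { toFun := fun l => ⟨(u + (h₂ : ℝ) • l.1, v - (h₁ : ℝ) • l.1),
        coset_add hle hu (zmem _ _ l.2),
        by
          rw [sub_eq_add_neg]
          exact coset_add hle hv (Λc.neg_mem (zmem _ _ l.2)),
        by
          rw [← huv]; dsimp only; module⟩
      invFun := fun p => ⟨(b : ℝ) • (p.1.1 - u) - (a : ℝ) • (p.1.2 - v),
        Λc.sub_mem (zmem _ _ (coset_sub p.2.1 hu)) (zmem _ _ (coset_sub p.2.2.1 hv))⟩
      left_inv := by
        intro l
        ext1
        have : l.1 = ((a : ℝ) * h₁ + b * h₂) • l.1 := by rw [habR, one_smul]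
        conv_rhs => rw [this]
        dsimp only
        module
      right_inv := by
        rintro ⟨⟨p, q⟩, hp, hq, hpq⟩
        have hz : (h₁ : ℝ) • (p - u) + (h₂ : ℝ) • (q - v) = 0 := by
          have : (h₁ : ℝ) • p + (h₂ : ℝ) • q - ((h₁ : ℝ) • u + (h₂ : ℝ) • v) = 0 := by
            rw [huv]; simp only at hpq; rw [hpq, sub_self]
          rw [← this]; module
        ext1
        refine Prod.ext ?_ ?_
        · dsimp only
          have e1 : p = u + (((a : ℝ) * h₁ + b * h₂) • (p - u)) -
            (a : ℝ) • ((h₁ : ℝ) • (p - u) + (h₂ : ℝ) • (q - v)) := by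
            rw [habR, hz]; simp
          conv_rhs => rw [e1]
          rw [hz]
          have e2 : u + (h₂ : ℝ) • ((b : ℝ) • (p - u) - (a : ℝ) • (q - v)) =
            u + (((a : ℝ) * h₁ + b * h₂) • (p - u)) -
            (a : ℝ) • ((h₁ : ℝ) • (p - u) + (h₂ : ℝ) • (q - v)) := by module
          rw [habR, hz] at e2
          simpa [habR] using e2
        · dsimp only
          have e2 : v - (h₁ : ℝ) • ((b : ℝ) • (p - u) - (a : ℝ) • (q - v)) =
            v + (((a : ℝ) * h₁ + b * h₂) • (q - v)) -
            (b : ℝ) • ((h₁ : ℝ) • (p - u) + (h₂ : ℝ) • (q - v)) := by module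
          rw [habR, hz] at e2
          simpa using e2 }
  have hs : 0 < (h₁ : ℝ) ^ 2 + (h₂ : ℝ) ^ 2 := by
    have : (h₁ : ℝ) ≠ 0 := by exact_mod_cast hh₁
    positivity
  refine ⟨((h₁ : ℝ) ^ 2 + (h₂ : ℝ) ^ 2)⁻¹ • ((h₁ : ℝ) • v - (h₂ : ℝ) • u), ?_⟩
  unfold TT gsum
  rw [← e.tsum_eq, ← tsum_mul_left]
  congr 1
  ext l
  change gaussDensity P (u + (h₂ : ℝ) • l.1) * gaussDensity P (v - (h₁ : ℝ) • l.1) = _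
  unfold gaussDensity
  rw [mul_mul_mul_comm, ← Real.exp_add, mul_assoc (_ * _), ← Real.exp_add]
  congr 2
  have := quad_identity (h₁ : ℝ) (h₂ : ℝ) u v l.1 hs
  rw [huv] at this
  rw [← add_div, ← neg_add, this]
  ring

end cosets

lemma numeric_bound (ε : ℝ) (M : ℕ) (hM4 : 4 < M) (h0 : 0 ≤ ε) (h1 : ε < 1 / (16 * Real.exp 1)) :
    Real.logb 2 (((1 + ε) / (1 - ε)) ^ 2) ≤
      16 * ε * (Real.logb 2 M - Real.logb 2 (16 * ε)) := by
  rcases h0.eq_or_lt with rfl | hpos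
  · simp
  have he : (2 : ℝ) ≤ Real.exp 1 := by
    have := Real.add_one_le_exp (1 : ℝ); linarith
  have hsmall : 16 * ε * Real.exp 1 < 1 := by
    rw [lt_div_iff₀ (by positivity)] at h1; linarith
  have hε2 : ε ≤ 1 / 2 := by nlinarith
  have h1ε : 0 < 1 - ε := by linarith
  have hl2 : 0 < Real.log 2 := Real.log_pos (by norm_num)
  have hlogr : Real.log ((1 + ε) / (1 - ε)) ≤ 3 * ε := by
    have a1 : Real.log (1 + ε) ≤ ε := by
      have := Real.log_le_sub_one_of_pos (show 0 < 1 + ε by linarith); linarith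
    have a2 : Real.log (1 - ε)⁻¹ ≤ (1 - ε)⁻¹ - 1 := Real.log_le_sub_one_of_pos (by positivity)
    have a3 : (1 - ε)⁻¹ - 1 ≤ 2 * ε := by
      have : (1 - ε)⁻¹ ≤ 1 + 2 * ε := by
        rw [inv_le_iff_one_le_mul₀ h1ε]; nlinarith
      linarith
    rw [div_eq_mul_inv, Real.log_mul (by linarith) (by positivity)]
    linarith
  have hlM : 1 ≤ Real.log M := by
    rw [Real.le_log_iff_exp_le (by positivity)]
    have : (4 : ℝ) < M := by exact_mod_cast hM4
    linarith [Real.exp_one_lt_d9]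
  have hlε : Real.log (16 * ε) ≤ -1 := by
    rw [Real.log_le_iff_le_exp (by positivity), Real.exp_neg, ← one_div,
      le_div_iff₀ (Real.exp_pos 1)]
    exact hsmall.le
  unfold Real.logb
  rw [Real.log_pow, ← sub_div, ← mul_div_assoc]
  refine div_le_div_of_nonneg_right ?_ hl2.le
  push_cast
  nlinarith

lemma logb_term (p q K : ℝ) (hp : 0 ≤ p) (hK : p ≤ K * q) (hK1 : 0 < K) :
    p * Real.logb 2 (p / q) ≤ p * Real.logb 2 K := by
  rcases hp.eq_or_lt with rfl | hpos
  · simp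
  have hq : 0 < q := by
    by_contra h
    push Not at h
    nlinarith
  refine mul_le_mul_of_nonneg_left ?_ hp
  refine Real.logb_le_logb_of_le (by norm_num) (by positivity) ?_
  rwa [div_le_iff₀ hq]

lemma condDist_hasSum {n : ℕ} {Λ Λc : Submodule ℤ (EuclideanSpace ℝ (Fin n))}
    [DiscreteTopology Λc] (hle : Λc ≤ Λ) [Finite (Λ ⧸ Λc.comap Λ.subtype)]
    {P : ℝ} (hP : 0 < P) (h₁ h₂ : ℤ) (x : Λ ⧸ Λc.comap Λ.subtype) :
    HasSum (fun w : Λ => condDist Λ Λc P h₁ h₂ x w.1) 1 := by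
  have := Fintype.ofFinite (Λ ⧸ Λc.comap Λ.subtype)
  have h := hasSum_sum (s := Finset.univ) (f := fun (y : Λ ⧸ Λc.comap Λ.subtype) (w : Λ) =>
    TT Λ Λc P h₁ h₂ x y w.1 / (cosetMass Λ Λc P x * cosetMass Λ Λc P y))
    (fun y _ => (TT_hasSum hle hP h₁ h₂ x y).div_const _)
  have h2 := h.mul_left (1 / (Nat.card (Λ ⧸ Λc.comap Λ.subtype) : ℝ))
  have hfun : (fun w : Λ => condDist Λ Λc P h₁ h₂ x w.1) = fun w : Λ =>
      (1 / (Nat.card (Λ ⧸ Λc.comap Λ.subtype) : ℝ)) * ∑ y : Λ ⧸ Λc.comap Λ.subtype,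
        TT Λ Λc P h₁ h₂ x y w.1 / (cosetMass Λ Λc P x * cosetMass Λ Λc P y) := by
    funext w
    rw [condDist_eq, tsum_fintype]
  rw [hfun]
  suffices hval : 1 / (Nat.card (Λ ⧸ Λc.comap Λ.subtype) : ℝ) *
      ∑ y : Λ ⧸ Λc.comap Λ.subtype, cosetMass Λ Λc P x * cosetMass Λ Λc P y /
        (cosetMass Λ Λc P x * cosetMass Λ Λc P y) = 1 by
    rw [hval] at h2
    exact h2
  have : ∀ y : Λ ⧸ Λc.comap Λ.subtype, cosetMass Λ Λc P x * cosetMass Λ Λc P y /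
      (cosetMass Λ Λc P x * cosetMass Λ Λc P y) = 1 := fun y =>
    div_self (mul_pos (cosetMass_pos hle hP x) (cosetMass_pos hle hP y)).ne'
  simp only [this, Finset.sum_const, Finset.card_univ, Nat.card_eq_fintype_card]
  have hc : (Fintype.card (Λ ⧸ Λc.comap Λ.subtype) : ℝ) ≠ 0 := by
    have : 0 < Fintype.card (Λ ⧸ Λc.comap Λ.subtype) := Fintype.card_pos
    exact_mod_cast this.ne'
  simp [hc]

lemma condDist_nonneg {n : ℕ} {Λ Λc : Submodule ℤ (EuclideanSpace ℝ (Fin n))}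
    [DiscreteTopology Λc] (hle : Λc ≤ Λ)
    {P : ℝ} (hP : 0 < P) (h₁ h₂ : ℤ) (x : Λ ⧸ Λc.comap Λ.subtype)
    (w : EuclideanSpace ℝ (Fin n)) : 0 ≤ condDist Λ Λc P h₁ h₂ x w := by
  rw [condDist_eq]
  refine mul_nonneg (by positivity) (tsum_nonneg fun y => div_nonneg (TT_nonneg hP _ _ _ _ _) ?_)
  exact (mul_pos (cosetMass_pos hle hP x) (cosetMass_pos hle hP y)).le

/-- All conditional distributions agree up to the factor `r ^ 2`. -/
lemma condDist_le {n : ℕ} {Λ Λc : Submodule ℤ (EuclideanSpace ℝ (Fin n))}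
    [DiscreteTopology Λc] (hle : Λc ≤ Λ) [Finite (Λ ⧸ Λc.comap Λ.subtype)]
    {P : ℝ} (hP : 0 < P) {h₁ h₂ : ℤ} (hh₁ : h₁ ≠ 0) (hco : IsCoprime h₁ h₂)
    (horder : ∀ l ∈ Λ, l ∉ Λc → h₁ • l ∉ Λc ∧ h₂ • l ∉ Λc)
    (r : ℝ) (hr0 : 0 < r)
    (hr : ∀ z z', gsum Λc (((h₁ : ℝ) ^ 2 + (h₂ : ℝ) ^ 2) / (2 * P)) z ≤
      r * gsum Λc (((h₁ : ℝ) ^ 2 + (h₂ : ℝ) ^ 2) / (2 * P)) z')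
    (x x' : Λ ⧸ Λc.comap Λ.subtype) (w : Λ) :
    condDist Λ Λc P h₁ h₂ x w.1 ≤ r ^ 2 * condDist Λ Λc P h₁ h₂ x' w.1 := by
  have hT : ∀ (x y x' y' : Λ ⧸ Λc.comap Λ.subtype) (w : Λ),
      h₁ • x + h₂ • y = h₁ • x' + h₂ • y' →
      TT Λ Λc P h₁ h₂ x y w.1 ≤ r * TT Λ Λc P h₁ h₂ x' y' w.1 := by
    intro x y x' y' w hc
    have hw : w.1 ∈ coset Λ Λc (Submodule.Quotient.mk w) := ⟨w.2, rfl⟩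
    by_cases h : h₁ • x + h₂ • y = Submodule.Quotient.mk w
    · have hw1 := hw
      rw [← h] at hw1
      have hw2 := hw1
      rw [hc] at hw2
      obtain ⟨z, hz⟩ := TT_eq hle hP hh₁ hco hw1
      obtain ⟨z', hz'⟩ := TT_eq hle hP hh₁ hco hw2
      rw [hz, hz', mul_left_comm]
      exact mul_le_mul_of_nonneg_left (hr z z') (by positivity)
    · rw [TT_zero hw h, TT_zero hw (hc ▸ h), mul_zero]
  have hG : ∀ (x y x' y' : Λ ⧸ Λc.comap Λ.subtype), h₁ • x + h₂ • y = h₁ • x' + h₂ • y' →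
      cosetMass Λ Λc P x * cosetMass Λ Λc P y ≤
        r * (cosetMass Λ Λc P x' * cosetMass Λ Λc P y') := fun x y x' y' hc =>
    hasSum_le (fun w => hT x y x' y' w hc) (TT_hasSum hle hP h₁ h₂ x y)
      ((TT_hasSum hle hP h₁ h₂ x' y').mul_left r)
  have hinj : Function.Injective fun y : Λ ⧸ Λc.comap Λ.subtype => h₂ • y := by
    have h0 : ∀ y : Λ ⧸ Λc.comap Λ.subtype, h₂ • y = 0 → y = 0 := by
      intro y hy
      obtain ⟨l, rfl⟩ := Submodule.Quotient.mk_surjective _ y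
      rw [← Submodule.Quotient.mk_smul, Submodule.Quotient.mk_eq_zero] at hy
      rw [Submodule.Quotient.mk_eq_zero]
      by_contra hne
      exact (horder l.1 l.2 hne).2 hy
    intro y y' hyy
    have : h₂ • (y - y') = 0 := by
      rw [smul_sub]; exact sub_eq_zero.mpr hyy
    exact sub_eq_zero.mp (h0 _ this)
  have hsurj := Finite.surjective_of_injective hinj
  have hsingle : ∀ x : Λ ⧸ Λc.comap Λ.subtype, ∃ y, h₁ • x + h₂ • y = Submodule.Quotient.mk w ∧
      condDist Λ Λc P h₁ h₂ x w.1 = (1 / (Nat.card (Λ ⧸ Λc.comap Λ.subtype) : ℝ)) *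
        (TT Λ Λc P h₁ h₂ x y w.1 / (cosetMass Λ Λc P x * cosetMass Λ Λc P y)) := by
    intro x
    obtain ⟨y, hy⟩ := hsurj (Submodule.Quotient.mk w - h₁ • x)
    have hy' : h₁ • x + h₂ • y = Submodule.Quotient.mk w := by
      simp only at hy; rw [hy]; abel
    refine ⟨y, hy', ?_⟩
    rw [condDist_eq, tsum_eq_single y]
    intro y' hne
    have hw : w.1 ∈ coset Λ Λc (Submodule.Quotient.mk w) := ⟨w.2, rfl⟩
    rw [TT_zero hw, zero_div]
    intro hc
    apply hne
    apply hinj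
    rw [← hy'] at hc
    exact add_left_cancel hc
  obtain ⟨y, hy, e⟩ := hsingle x
  obtain ⟨y', hy', e'⟩ := hsingle x'
  rw [e, e', mul_left_comm]
  refine mul_le_mul_of_nonneg_left ?_ (by positivity)
  have g1 := mul_pos (cosetMass_pos hle hP x) (cosetMass_pos hle hP y)
  have g2 := mul_pos (cosetMass_pos hle hP x') (cosetMass_pos hle hP y')
  rw [← mul_div_assoc, div_le_div_iff₀ g1 g2]
  calc _ ≤ (r * TT Λ Λc P h₁ h₂ x' y' w.1) * (r * (cosetMass Λ Λc P x * cosetMass Λ Λc P y)) :=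
        mul_le_mul (hT x y x' y' w (hy.trans hy'.symm)) (hG x' y' x y (hy'.trans hy.symm)) g2.le
          (mul_nonneg hr0.le (TT_nonneg hP _ _ _ _ _))
    _ = _ := by ring

/-- **strong secrecy: mutual-information bound.** Let `Λc ⊆ Λ` be nested
lattices in `ℝⁿ` with finite quotient `Λ/Λc` of cardinality `M > 4`, and let `h₁, h₂` be
nonzero coprime integers such that no nonzero element of `Λ/Λc` has order dividing `h₁` or
`h₂`. Fix `P > 0` and let `ε = ε_{Λc}(√(P/(h₁²+h₂²)))` be the flatness factor of `Λc`. If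
`ε < 1/(16e)`, then the mutual information between the uniform message `X` and the
observation `W = h₁·U + h₂·V`, given by
`I(X;W) = Σ_x Σ_{w∈Λ} (1/M)·P_x(w)·log₂(P_x(w)/P̄(w))` (terms with `P_x(w) = 0` are `0`),
satisfies `I(X;W) ≤ 16ε·(log₂ M − log₂(16ε))`. -/
theorem stmt_2 {n : ℕ} (Λ Λc : Submodule ℤ (EuclideanSpace ℝ (Fin n)))
    [DiscreteTopology Λ] [DiscreteTopology Λc] [IsZLattice ℝ Λc] (hle : Λc ≤ Λ)
    [Finite (Λ ⧸ Λc.comap Λ.subtype)] (M : ℕ) (hM : Nat.card (Λ ⧸ Λc.comap Λ.subtype) = M)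
    (hM4 : 4 < M)
    (h₁ h₂ : ℤ) (hh₁ : h₁ ≠ 0) (hh₂ : h₂ ≠ 0) (hco : IsCoprime h₁ h₂)
    (horder : ∀ l ∈ Λ, l ∉ Λc → h₁ • l ∉ Λc ∧ h₂ • l ∉ Λc)
    (P : ℝ) (hP : 0 < P)
    (hε : flatnessFactor Λc (Real.sqrt (P / ((h₁ : ℝ) ^ 2 + (h₂ : ℝ) ^ 2))) <
      1 / (16 * Real.exp 1)) :
    (∑' x : Λ ⧸ Λc.comap Λ.subtype, ∑' w : Λ,
        (1 / (M : ℝ)) * condDist Λ Λc P h₁ h₂ x (w : EuclideanSpace ℝ (Fin n)) *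
          Real.logb 2 (condDist Λ Λc P h₁ h₂ x (w : EuclideanSpace ℝ (Fin n)) /
            avgDist Λ Λc P h₁ h₂ (w : EuclideanSpace ℝ (Fin n)))) ≤
      16 * flatnessFactor Λc (Real.sqrt (P / ((h₁ : ℝ) ^ 2 + (h₂ : ℝ) ^ 2))) *
        (Real.logb 2 M -
          Real.logb 2 (16 * flatnessFactor Λc (Real.sqrt (P / ((h₁ : ℝ) ^ 2 + (h₂ : ℝ) ^ 2))))) := by
  have hs : 0 < (h₁ : ℝ) ^ 2 + (h₂ : ℝ) ^ 2 := by
    have : (h₁ : ℝ) ≠ 0 := by exact_mod_cast hh₁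
    positivity
  have hθ : 0 < Real.sqrt (P / ((h₁ : ℝ) ^ 2 + (h₂ : ℝ) ^ 2)) := Real.sqrt_pos.mpr (by positivity)
  obtain ⟨hε0, hflat⟩ := flat_facts Λc _ hθ
  have hc : 1 / (2 * Real.sqrt (P / ((h₁ : ℝ) ^ 2 + (h₂ : ℝ) ^ 2)) ^ 2) =
      ((h₁ : ℝ) ^ 2 + (h₂ : ℝ) ^ 2) / (2 * P) := by
    rw [Real.sq_sqrt (by positivity)]
    field_simp
  rw [hc] at hflat
  set ε := flatnessFactor Λc (Real.sqrt (P / ((h₁ : ℝ) ^ 2 + (h₂ : ℝ) ^ 2))) with hεdef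
  have hε1 : ε < 1 := by
    refine hε.trans ?_
    rw [div_lt_one (by positivity)]
    have := Real.add_one_le_exp (1 : ℝ); linarith
  have h1ε : 0 < 1 - ε := by linarith
  have hr0 : 0 < (1 + ε) / (1 - ε) := by positivity
  have hr : ∀ z z', gsum Λc (((h₁ : ℝ) ^ 2 + (h₂ : ℝ) ^ 2) / (2 * P)) z ≤
      (1 + ε) / (1 - ε) * gsum Λc (((h₁ : ℝ) ^ 2 + (h₂ : ℝ) ^ 2) / (2 * P)) z' := by
    intro z z'
    rcases hflat z z' with h | h
    · rw [div_mul_eq_mul_div, le_div_iff₀ h1ε]; linarith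
    · linarith
  have hcond := condDist_le hle hP hh₁ hco horder _ hr0 hr
  refine le_trans ?_ (numeric_bound ε M hM4 hε0 hε)
  set K := ((1 + ε) / (1 - ε)) ^ 2 with hK
  have hK0 : 0 < K := by positivity
  have hK1 : 0 ≤ Real.logb 2 K := by
    apply Real.logb_nonneg (by norm_num)
    apply one_le_pow₀
    rw [le_div_iff₀ h1ε]; linarith
  have hMpos : (0 : ℝ) < M := by
    have : 0 < M := by omega
    exact_mod_cast this
  have := Fintype.ofFinite (Λ ⧸ Λc.comap Λ.subtype)
  have hcard : (Finset.univ : Finset (Λ ⧸ Λc.comap Λ.subtype)).card = M := by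
    rw [Finset.card_univ, ← Nat.card_eq_fintype_card, hM]
  have havg : ∀ (x : Λ ⧸ Λc.comap Λ.subtype) (w : Λ),
      condDist Λ Λc P h₁ h₂ x w.1 ≤ K * avgDist Λ Λc P h₁ h₂ w.1 := by
    intro x w
    unfold avgDist
    rw [hM, tsum_fintype, mul_left_comm, Finset.mul_sum, one_div, ← div_eq_inv_mul,
      le_div_iff₀ hMpos]
    have := Finset.card_nsmul_le_sum Finset.univ
      (fun x' => K * condDist Λ Λc P h₁ h₂ x' w.1) (condDist Λ Λc P h₁ h₂ x w.1)
      (fun x' _ => hcond x x' w)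
    rw [hcard, nsmul_eq_mul] at this
    linarith
  have hinner : ∀ x : Λ ⧸ Λc.comap Λ.subtype, (∑' w : Λ,
        (1 / (M : ℝ)) * condDist Λ Λc P h₁ h₂ x (w : EuclideanSpace ℝ (Fin n)) *
          Real.logb 2 (condDist Λ Λc P h₁ h₂ x (w : EuclideanSpace ℝ (Fin n)) /
            avgDist Λ Λc P h₁ h₂ (w : EuclideanSpace ℝ (Fin n)))) ≤ (1 / (M : ℝ)) * Real.logb 2 K := by
    intro x
    have hsum := ((condDist_hasSum hle hP h₁ h₂ x).mul_right (Real.logb 2 K)).mul_left (1 / (M : ℝ))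
    rw [one_mul] at hsum
    by_cases hsm : Summable fun w : Λ =>
        (1 / (M : ℝ)) * condDist Λ Λc P h₁ h₂ x (w : EuclideanSpace ℝ (Fin n)) *
          Real.logb 2 (condDist Λ Λc P h₁ h₂ x (w : EuclideanSpace ℝ (Fin n)) /
            avgDist Λ Λc P h₁ h₂ (w : EuclideanSpace ℝ (Fin n)))
    · refine hasSum_le (fun w => ?_) hsm.hasSum hsum
      rw [mul_assoc]
      refine mul_le_mul_of_nonneg_left ?_ (by positivity)
      exact logb_term _ _ K (condDist_nonneg hle hP h₁ h₂ x w.1) (havg x w) hK0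
    · rw [tsum_eq_zero_of_not_summable hsm]
      positivity
  rw [tsum_fintype]
  refine (Finset.sum_le_sum fun x _ => hinner x).trans ?_
  rw [Finset.sum_const, hcard, nsmul_eq_mul]
  apply le_of_eq
  field_simp


end
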